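/- arXiv:0902.3419 — 2 statements merged into one kernel-verified Lean document; each statement's English description precedes it below -/
import Mathlib

section
/- Under the stated assumptions including non-periodicity, A(N) ∼ (μ/ρ) N^{ρ} as N → ∞, where μ/ρ = −1/(ρ 𝒫′(ρ)). -/
open scoped BigOperators ENNReal
open Filter Asymptotics

noncomputable section

/-- `af P m n` is the number of ordered `m`-tuples `(n₁,…,n_m)` of elements of `P`
with product `n` (so `af P 0 n = 1` iff `n = 1`). -/
def af (P : Set ℕ) (m n : ℕ) : ℕ :=
  Nat.card {t : Fin m → ℕ // (∀ i, t i ∈ P) ∧ ∏ i, t i = n}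

/-- `aTot P n = a(n) = Σ_{m ≥ 0} a_m(n)`. -/
def aTot (P : Set ℕ) (n : ℕ) : ℝ := ∑' m : ℕ, (af P m n : ℝ)

/-- `Acum P N = A(N) = Σ_{1 ≤ n ≤ N} a(n)`. -/
def Acum (P : Set ℕ) (N : ℕ) : ℝ := ∑ n ∈ Finset.Icc 1 N, aTot P n

/-- The Dirichlet series `𝒫(x) = Σ_{n ∈ 𝒫} n^{-x}` at a real point. -/
def Pval (P : Set ℕ) (x : ℝ) : ℝ := ∑' n : P, ((n : ℕ) : ℝ) ^ (-x)

/-- `𝒫'(x) = -Σ_{n ∈ 𝒫} n^{-x} log n`. -/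
def Pderiv1 (P : Set ℕ) (x : ℝ) : ℝ := -∑' n : P, ((n : ℕ) : ℝ) ^ (-x) * Real.log (n : ℕ)

/-- `𝒫''(x) = Σ_{n ∈ 𝒫} n^{-x} (log n)^2`. -/
def Pderiv2 (P : Set ℕ) (x : ℝ) : ℝ := ∑' n : P, ((n : ℕ) : ℝ) ^ (-x) * (Real.log (n : ℕ)) ^ 2

/-- The abscissa of convergence `κ` of the Dirichlet series of `P`, as an extended real
(`⊥` when `P` is finite). -/
def kappa (P : Set ℕ) : EReal :=
  sInf {x : EReal | ∃ r : ℝ, x = (r : EReal) ∧ Summable (fun n : P => ((n : ℕ) : ℝ) ^ (-r))}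

open Classical in
/-- The (possibly infinite) value `𝒫(x) ∈ (0,∞]` of the Dirichlet series at an
extended-real point; at `x = -∞` every term `n^{-x}` is infinite. -/
def PvalE (P : Set ℕ) (x : EReal) : ℝ≥0∞ :=
  if x = ⊥ then ⊤ else ∑' n : P, ENNReal.ofReal (((n : ℕ) : ℝ) ^ (-x.toReal))

/-!
Fix the first factor of each tuple: `A(N) = 1 + ∑_{n ∈ P} A(N / n)`. Hence
`f(x) = e^{-ρx} A(e^x)` satisfies the renewal equation
`f(x) = ∑ n^{-ρ} f(x - log n) + e^{-ρx}` for `x ≥ 0`, whose weights `n^{-ρ}` are a probability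
distribution, and the claim is that `f` converges.

Let `f(x_k)` tend to `limsup f`. An average with positive weights can only approach its maximum if
all averaged values do, so `f(x_k - s)` has the same limit for every `s` in the additive semigroup
generated by the `log n`. By non-periodicity that semigroup is eventually dense, and `f` cannot
decrease quickly, so `f` is close to `limsup f` on arbitrarily long intervals; the same holds for
`liminf f`. Integrating the renewal equation shows that
`∑ n^{-ρ} ∫_{x - log n}^x f = ∫_0^x e^{-ρt} dt → 1/ρ`, which on such plateaus reads
`(limsup f) · m = 1/ρ = (liminf f) · m` with `m = ∑ n^{-ρ} log n`.
-/

open Topology MeasureTheory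

section Averages

variable {ι α : Type*} {w : ι → ℝ} {F : Filter α} {C M : ℝ}

theorem summable_mul_of_abs_le {v : ι → ℝ} (hw : Summable w) (hv : ∀ i, |v i| ≤ C) :
    Summable fun i => w i * v i :=
  .of_norm_bounded (hw.abs.mul_right C) fun i => by
    rw [norm_mul, Real.norm_eq_abs, Real.norm_eq_abs]
    exact mul_le_mul_of_nonneg_left (hv i) (abs_nonneg _)

theorem tendsto_tsum_mul_of_abs_le {u : ι → α → ℝ} {v : ι → ℝ} (hw : Summable w)
    (hC : ∀ i x, |u i x| ≤ C) (hu : ∀ i, Tendsto (u i) F (𝓝 (v i))) :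
    Tendsto (fun x => ∑' i, w i * u i x) F (𝓝 (∑' i, w i * v i)) := by
  refine tendsto_tsum_of_dominated_convergence (hw.abs.mul_right C)
    (fun i => (hu i).const_mul _) (.of_forall fun x i => ?_)
  rw [norm_mul, Real.norm_eq_abs, Real.norm_eq_abs]
  exact mul_le_mul_of_nonneg_left (hC i x) (abs_nonneg _)

/- The excesses of the terms over `M` vanish in the limit, so the mean of the nonnegative gaps
`M + excess - u` tends to `0`, and with it each single gap. -/
theorem tendsto_of_tendsto_tsum_mul {u : ι → α → ℝ} (hw : ∀ i, 0 < w i) (hw1 : HasSum w 1)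
    (hC : ∀ i x, |u i x| ≤ C) (hle : ∀ i, ∀ ε > 0, ∀ᶠ x in F, u i x ≤ M + ε)
    (hmean : Tendsto (fun x => ∑' i, w i * u i x) F (𝓝 M)) (i : ι) :
    Tendsto (u i) F (𝓝 M) := by
  set excess : ι → α → ℝ := fun j x => max (u j x - M) 0
  have excess_abs_le (j : ι) (x : α) : |excess j x| ≤ C + |M| := by
    rw [abs_of_nonneg (le_max_right _ _)]
    refine max_le ?_ (add_nonneg ((abs_nonneg _).trans (hC j x)) (abs_nonneg M))
    linarith [(abs_le.1 (hC j x)).2, neg_abs_le M]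
  have tendsto_excess (j : ι) : Tendsto (excess j) F (𝓝 0) :=
    tendsto_order.2 ⟨fun a ha => .of_forall fun x => ha.trans_le (le_max_right _ _),
      fun ε hε => (hle j (ε / 2) (half_pos hε)).mono fun x hx => max_lt (by linarith) hε⟩
  have tendsto_mean_excess : Tendsto (fun x => ∑' j, w j * excess j x) F (𝓝 0) := by
    simpa using tendsto_tsum_mul_of_abs_le hw1.summable excess_abs_le tendsto_excess
  have gap_nonneg (j : ι) (x : α) : 0 ≤ w j * (M + excess j x - u j x) :=
    mul_nonneg (hw j).le (by linarith [le_max_left (u j x - M) 0])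
  have hasSum_gap (x : α) : HasSum (fun j => w j * (M + excess j x - u j x))
      (M + ∑' j, w j * excess j x - ∑' j, w j * u j x) := by
    have hu := (summable_mul_of_abs_le hw1.summable (hC · x)).hasSum
    have he := (summable_mul_of_abs_le hw1.summable (excess_abs_le · x)).hasSum
    simpa [mul_add, mul_sub] using ((hw1.mul_right M).add he).sub hu
  have tendsto_gap : Tendsto (fun x => w i * (M + excess i x - u i x)) F (𝓝 0) := by
    refine squeeze_zero (gap_nonneg i)
      (fun x => le_hasSum (hasSum_gap x) i fun j _ => gap_nonneg j x) ?_
    simpa using (tendsto_mean_excess.const_add M).sub hmean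
  have := ((tendsto_excess i).const_add M).sub (tendsto_gap.const_mul (w i)⁻¹)
  simpa [inv_mul_cancel_left₀ (hw i).ne'] using this

end Averages

section EventuallyDense

/-- The set `S` becomes dense at `+∞`: every half-open interval of a fixed length far enough to the
right meets `S`. -/
def EventuallyDense (S : Set ℝ) : Prop :=
  ∀ ε > 0, ∀ᶠ y in atTop, ∃ s ∈ S, s ∈ Set.Ico y (y + ε)

theorem exists_sub_eq_of_mem_addSubgroup_closure {G : Type*} [AddCommGroup G] {X : Set G} {d : G}
    (hd : d ∈ AddSubgroup.closure X) :
    ∃ a ∈ AddSubmonoid.closure X, ∃ b ∈ AddSubmonoid.closure X, a - b = d := by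
  rw [← AddSubgroup.mem_toAddSubmonoid, AddSubgroup.closure_toAddSubmonoid,
    AddSubmonoid.closure_union, AddSubmonoid.mem_sup] at hd
  obtain ⟨a, ha, b, hb, rfl⟩ := hd
  rw [AddSubmonoid.closure_neg, AddSubmonoid.mem_neg] at hb
  exact ⟨a, ha, -b, hb, sub_neg_eq_add a b⟩

/- Far out, `y` lies above a multiple `k * b` with `k` so large that replacing copies of `b` by
copies of `a`, in steps of `a - b ≤ ε`, reaches `y` before they run out. -/
theorem eventually_exists_mem_Ico_of_sub_le {S : AddSubmonoid ℝ} {a b ε : ℝ} (ha : a ∈ S)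
    (hb : b ∈ S) (hb0 : 0 < b) (hba : b < a) (hε : a - b ≤ ε) :
    ∀ᶠ y in atTop, ∃ s ∈ S, s ∈ Set.Ico y (y + ε) := by
  have hd : 0 < a - b := sub_pos.2 hba
  filter_upwards [eventually_ge_atTop (⌈b / (a - b)⌉₊ * b)] with y hy
  have hy0 : 0 ≤ y := le_trans (by positivity) hy
  set k := ⌊y / b⌋₊
  have hk_le : k * b ≤ y := (le_div_iff₀ hb0).1 (Nat.floor_le (by positivity))
  have lt_hk : y < (k + 1) * b := (div_lt_iff₀ hb0).1 (Nat.lt_floor_add_one _)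
  set j := ⌈(y - k * b) / (a - b)⌉₊
  have hjk : j ≤ k := calc
    j ≤ ⌈b / (a - b)⌉₊ := Nat.ceil_mono (by gcongr; linarith)
    _ ≤ k := Nat.le_floor ((le_div_iff₀ hb0).2 hy)
  have le_hj : y - k * b ≤ j * (a - b) := (div_le_iff₀ hd).1 (Nat.le_ceil _)
  have hj_lt : j * (a - b) < y - k * b + (a - b) := by
    rw [← lt_div_iff₀ hd, add_div, div_self hd.ne']
    exact Nat.ceil_lt_add_one (div_nonneg (sub_nonneg.2 hk_le) hd.le)
  have hs : (k - j) • b + j • a = k * b + j * (a - b) := by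
    rw [nsmul_eq_mul, nsmul_eq_mul, Nat.cast_sub hjk]; ring
  refine ⟨(k - j) • b + j • a, S.add_mem (S.nsmul_mem hb _) (S.nsmul_mem ha _), ?_⟩
  rw [hs]
  constructor <;> linarith

theorem eventuallyDense_closure {X : Set ℝ} (hX : X.Nonempty) (hpos : ∀ x ∈ X, 0 < x)
    (hd : Dense (AddSubgroup.closure X : Set ℝ)) :
    EventuallyDense (AddSubmonoid.closure X) := by
  intro ε hε
  obtain ⟨d, hdX, hd0, hdε⟩ := hd.exists_between hε
  obtain ⟨a, ha, b, hb, hab⟩ := exists_sub_eq_of_mem_addSubgroup_closure hdX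
  obtain ⟨x, hx⟩ := hX
  have hxS := AddSubmonoid.subset_closure hx
  have hb_nonneg : 0 ≤ b :=
    AddSubmonoid.closure_le (S := AddSubmonoid.nonneg ℝ).2 (fun x hx => (hpos x hx).le) hb
  exact eventually_exists_mem_Ico_of_sub_le (add_mem ha hxS) (add_mem hb hxS)
    (add_pos_of_nonneg_of_pos hb_nonneg (hpos x hx)) (by linarith) (by linarith)

end EventuallyDense

section SlowlyDecreasing

variable {f : ℝ → ℝ} {F : Filter ℝ} {M : ℝ}

/-- `f` is slowly decreasing, the Tauberian condition of Schmidt, here uniformly on the whole line: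
over short intervals `f` can drop only by a small amount. -/
def SlowlyDecreasing (f : ℝ → ℝ) : Prop :=
  ∀ δ > 0, ∃ η > 0, ∀ x, ∀ h ∈ Set.Icc 0 η, f x - δ ≤ f (x + h)

/- Every `y` lies between two nearby points `s < y < s'` of `S`; slow decrease bounds `f (x - y)`
from below by `f (x - s')` and from above by `f (x - s)`. -/
theorem SlowlyDecreasing.eventually_prod_nhds_abs_sub_le (hf : SlowlyDecreasing f) {S : Set ℝ}
    (hS : EventuallyDense S) (hF : ∀ s ∈ S, Tendsto (fun x => f (x - s)) F (𝓝 M)) {δ : ℝ}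
    (hδ : 0 < δ) :
    ∃ T, ∀ y ≥ T, ∀ᶠ p : ℝ × ℝ in F ×ˢ 𝓝 y, |f (p.1 - p.2) - M| ≤ δ := by
  obtain ⟨η, hη, hdrop⟩ := hf (δ / 2) (half_pos hδ)
  obtain ⟨T, hT⟩ := eventually_atTop.1 (hS (η / 3) (by positivity))
  refine ⟨T + η, fun y hy => ?_⟩
  obtain ⟨s, hs, hys, hsy⟩ := hT (y - 2 * η / 3) (by linarith)
  obtain ⟨s', hs', hys', hsy'⟩ := hT (y + η / 3) (by linarith)
  have near {r : ℝ} (hr : r ∈ S) : ∀ᶠ x in F, |f (x - r) - M| < δ / 2 :=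
    (hF r hr).eventually (Metric.ball_mem_nhds M (half_pos hδ))
  have hnhds : Set.Ioo (y - η / 3) (y + η / 3) ∈ 𝓝 y := Ioo_mem_nhds (by linarith) (by linarith)
  filter_upwards [prod_mem_prod ((near hs).and (near hs')) hnhds] with ⟨x, t⟩ ⟨⟨hxs, hxs'⟩, ht⟩
  have hleft := hdrop (x - t) (t - s) ⟨by linarith [ht.1], by linarith [ht.2]⟩
  have hright := hdrop (x - s') (s' - t) ⟨by linarith [ht.2], by linarith [ht.1]⟩
  rw [sub_add_sub_cancel] at hleft hright
  rw [abs_lt] at hxs hxs'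
  exact abs_le.2 ⟨by linarith, by linarith⟩

theorem SlowlyDecreasing.eventually_forall_Icc_abs_sub_le (hf : SlowlyDecreasing f) {S : Set ℝ}
    (hS : EventuallyDense S) (hF : ∀ s ∈ S, Tendsto (fun x => f (x - s)) F (𝓝 M)) {δ : ℝ}
    (hδ : 0 < δ) :
    ∃ T, ∀ L, ∀ᶠ x in F, ∀ y ∈ Set.Icc T L, |f (x - y) - M| ≤ δ := by
  obtain ⟨T, hT⟩ := hf.eventually_prod_nhds_abs_sub_le hS hF hδ
  refine ⟨T, fun L => ?_⟩
  have hcompact : IsCompact (Set.Icc T L) := isCompact_Icc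
  have := hcompact.mem_prod_nhdsSet_of_forall fun y hy => hT y hy.1
  exact (Eventually.curry this).mono fun x hx => hx.self_of_nhdsSet

theorem SlowlyDecreasing.exists_seq_tendsto (hf : SlowlyDecreasing f) {S : Set ℝ}
    (hS : EventuallyDense S) [F.NeBot] (hFtop : F ≤ atTop)
    (hF : ∀ s ∈ S, Tendsto (fun x => f (x - s)) F (𝓝 M)) :
    ∃ z : ℕ → ℝ, Tendsto z atTop atTop ∧
      ∀ y ≥ 0, Tendsto (fun n => f (z n - y)) atTop (𝓝 M) := by
  have plateau (n : ℕ) : ∃ z : ℝ, n ≤ z ∧ ∀ y ∈ Set.Icc (0 : ℝ) n,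
      |f (z - y) - M| ≤ 1 / (n + 1 : ℝ) := by
    obtain ⟨T, hT⟩ := hf.eventually_forall_Icc_abs_sub_le hS hF (δ := 1 / (n + 1 : ℝ))
      (by positivity)
    obtain ⟨x, hx, hnx⟩ := ((hT (T + n)).and (hFtop (eventually_ge_atTop (T + n)))).exists
    refine ⟨x - T, by linarith, fun y hy => ?_⟩
    rw [sub_sub]
    exact hx (T + y) ⟨by linarith [hy.1], by linarith [hy.2]⟩
  choose z hz_ge hz using plateau
  refine ⟨z, tendsto_atTop_mono hz_ge tendsto_natCast_atTop_atTop, fun y hy => ?_⟩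
  refine tendsto_iff_norm_sub_tendsto_zero.2 (squeeze_zero' (.of_forall fun n => norm_nonneg _) ?_
    tendsto_one_div_add_atTop_nhds_zero_nat)
  filter_upwards [eventually_ge_atTop ⌈y⌉₊] with n hn
  exact hz n y ⟨hy, Nat.ceil_le.1 hn⟩

end SlowlyDecreasing

section BoundedMeasurable

variable {f : ℝ → ℝ} {C M : ℝ}

theorem intervalIntegrable_of_abs_le (hf : Measurable f) (hC : ∀ x, |f x| ≤ C) (a b : ℝ) :
    IntervalIntegrable f volume a b :=
  (intervalIntegrable_const (c := C)).mono_fun' hf.aestronglyMeasurable (.of_forall hC)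

theorem tendsto_integral_sub {α : Type*} {F : Filter α} [F.IsCountablyGenerated] {z : α → ℝ}
    {a : ℝ} (ha : 0 ≤ a) (hf : Measurable f) (hC : ∀ x, |f x| ≤ C)
    (hz : ∀ y ≥ 0, Tendsto (fun n => f (z n - y)) F (𝓝 M)) :
    Tendsto (fun n => ∫ t in (z n - a)..(z n), f t) F (𝓝 (a * M)) := by
  have := intervalIntegral.tendsto_integral_filter_of_dominated_convergence (a := 0) (b := a)
    (F := fun n y => f (z n - y)) (f := fun _ => M) (l := F) (μ := volume) (fun _ => C)
    (.of_forall fun n => (hf.comp (measurable_id.const_sub _)).aestronglyMeasurable)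
    (.of_forall fun n => .of_forall fun y _ => hC _) intervalIntegrable_const
    (.of_forall fun y hy => hz y ?_)
  · simpa using this
  · rw [Set.uIoc_of_le ha] at hy
    exact hy.1.le

end BoundedMeasurable

section RenewalEquation

variable {ι : Type*} {w ℓ : ι → ℝ} {f g : ℝ → ℝ} {C M G m : ℝ}

/-- `f` solves the renewal equation `f = ∑ i, w i • f (· - ℓ i) + g` on `[0, ∞)`, with step lengths
`ℓ i`, weights `w i` and inhomogeneity `g`, and vanishes on the negative half-line. -/
structure IsRenewalSolution (w ℓ : ι → ℝ) (g f : ℝ → ℝ) : Prop where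
  eq_zero_of_neg : ∀ x < 0, f x = 0
  eq_tsum_add : ∀ x ≥ 0, f x = ∑' i, w i * f (x - ℓ i) + g x

namespace IsRenewalSolution

theorem neg (hf : IsRenewalSolution w ℓ g f) : IsRenewalSolution w ℓ (-g) (-f) where
  eq_zero_of_neg x hx := by simp [hf.eq_zero_of_neg x hx]
  eq_tsum_add x hx := by simp [hf.eq_tsum_add x hx, tsum_neg, add_comm]

theorem tendsto_comp_sub_step (hf : IsRenewalSolution w ℓ g f) (hw : ∀ i, 0 < w i)
    (hw1 : HasSum w 1) (hC : ∀ x, |f x| ≤ C) (hg : Tendsto g atTop (𝓝 0))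
    (hM : ∀ ε > 0, ∀ᶠ x in atTop, f x ≤ M + ε) {F : Filter ℝ} (hFtop : F ≤ atTop)
    (hF : Tendsto f F (𝓝 M)) (i : ι) : Tendsto (fun x => f (x - ℓ i)) F (𝓝 M) := by
  have tendsto_sub (j : ι) : Tendsto (fun x => x - ℓ j) F atTop :=
    (tendsto_atTop_add_const_right _ (-ℓ j) tendsto_id).mono_left hFtop
  refine tendsto_of_tendsto_tsum_mul (u := fun j x => f (x - ℓ j)) hw hw1 (fun j x => hC _)
    (fun j ε hε => (tendsto_sub j).eventually (hM ε hε)) ?_ i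
  have hsub : Tendsto (fun x => f x - g x) F (𝓝 M) := by
    simpa using hF.sub (hg.mono_left hFtop)
  refine hsub.congr' (hFtop ?_)
  filter_upwards [eventually_ge_atTop 0] with x hx
  rw [hf.eq_tsum_add x hx, add_sub_cancel_right]

theorem tendsto_comp_sub (hf : IsRenewalSolution w ℓ g f) (hw : ∀ i, 0 < w i)
    (hw1 : HasSum w 1) (hC : ∀ x, |f x| ≤ C) (hg : Tendsto g atTop (𝓝 0))
    (hM : ∀ ε > 0, ∀ᶠ x in atTop, f x ≤ M + ε) {F : Filter ℝ} (hFtop : F ≤ atTop)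
    (hF : Tendsto f F (𝓝 M)) {s : ℝ} (hs : s ∈ AddSubmonoid.closure (Set.range ℓ)) :
    Tendsto (fun x => f (x - s)) F (𝓝 M) := by
  induction hs using AddSubmonoid.closure_induction generalizing F with
  | mem s hs =>
    obtain ⟨i, rfl⟩ := hs
    exact hf.tendsto_comp_sub_step hw hw1 hC hg hM hFtop hF i
  | zero => simpa using hF
  | add s t _ _ ihs iht =>
    have hmap : map (· - s) F ≤ atTop :=
      (tendsto_atTop_add_const_right _ (-s) tendsto_id).mono_left hFtop
    have := tendsto_map'_iff.1 (iht hmap (tendsto_map'_iff.2 (ihs hFtop hF)))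
    simpa [Function.comp_def, sub_sub] using this

theorem exists_filter_tendsto_comp_sub (hf : IsRenewalSolution w ℓ g f) (hw : ∀ i, 0 < w i)
    (hw1 : HasSum w 1) (hC : ∀ x, |f x| ≤ C) (hg : Tendsto g atTop (𝓝 0))
    (hM : ∀ ε > 0, ∀ᶠ x in atTop, f x ≤ M + ε) (hcluster : MapClusterPt M atTop f) :
    ∃ F : Filter ℝ, F.NeBot ∧ F ≤ atTop ∧
      ∀ s ∈ AddSubmonoid.closure (Set.range ℓ), Tendsto (fun x => f (x - s)) F (𝓝 M) := by
  obtain ⟨U, hUtop, hU⟩ := mapClusterPt_iff_ultrafilter.1 hcluster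
  exact ⟨U, U.neBot, hUtop, fun s hs => hf.tendsto_comp_sub hw hw1 hC hg hM hUtop hU hs⟩

theorem exists_filter_tendsto_comp_sub_limsup (hf : IsRenewalSolution w ℓ g f)
    (hw : ∀ i, 0 < w i) (hw1 : HasSum w 1) (hC : ∀ x, |f x| ≤ C) (hg : Tendsto g atTop (𝓝 0)) :
    ∃ F : Filter ℝ, F.NeBot ∧ F ≤ atTop ∧ ∀ s ∈ AddSubmonoid.closure (Set.range ℓ),
      Tendsto (fun x => f (x - s)) F (𝓝 (limsup f atTop)) := by
  have hle : IsBoundedUnder (· ≤ ·) atTop f := isBoundedUnder_of ⟨C, fun x => (abs_le.1 (hC x)).2⟩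
  have hge : IsBoundedUnder (· ≥ ·) atTop f := isBoundedUnder_of ⟨-C, fun x => (abs_le.1 (hC x)).1⟩
  refine hf.exists_filter_tendsto_comp_sub hw hw1 hC hg (fun ε hε => ?_)
    (MapClusterPt.limsup hge.isCoboundedUnder_le hle)
  exact (eventually_lt_of_limsup_lt (lt_add_of_pos_right _ hε) hle).mono fun _ => le_of_lt

theorem exists_filter_tendsto_comp_sub_liminf (hf : IsRenewalSolution w ℓ g f)
    (hw : ∀ i, 0 < w i) (hw1 : HasSum w 1) (hC : ∀ x, |f x| ≤ C) (hg : Tendsto g atTop (𝓝 0)) :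
    ∃ F : Filter ℝ, F.NeBot ∧ F ≤ atTop ∧ ∀ s ∈ AddSubmonoid.closure (Set.range ℓ),
      Tendsto (fun x => f (x - s)) F (𝓝 (liminf f atTop)) := by
  have hle : IsBoundedUnder (· ≤ ·) atTop f := isBoundedUnder_of ⟨C, fun x => (abs_le.1 (hC x)).2⟩
  have hge : IsBoundedUnder (· ≥ ·) atTop f := isBoundedUnder_of ⟨-C, fun x => (abs_le.1 (hC x)).1⟩
  have hcluster : MapClusterPt (liminf f atTop) atTop f :=
    MapClusterPt.liminf hle.isCoboundedUnder_ge hge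
  have neg_le (ε : ℝ) (hε : 0 < ε) : ∀ᶠ x in atTop, (-f) x ≤ -liminf f atTop + ε := by
    filter_upwards [eventually_lt_of_lt_liminf (sub_lt_self _ hε) hge] with x hx
    simp only [Pi.neg_apply]
    linarith
  obtain ⟨F, hF, hFtop, hlim⟩ := hf.neg.exists_filter_tendsto_comp_sub hw hw1
    (fun x => (abs_neg (f x)).trans_le (hC x)) (by simpa using! hg.neg) neg_le
    (hcluster.continuousAt_comp continuous_neg.continuousAt)
  exact ⟨F, hF, hFtop, fun s hs => by simpa using (hlim s hs).neg⟩

theorem integral_neg_zero_eq_zero (hf : IsRenewalSolution w ℓ g f) {a : ℝ} (ha : 0 ≤ a) :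
    ∫ t in (-a)..0, f t = 0 := by
  refine intervalIntegral.integral_zero_ae ?_
  filter_upwards [Measure.ae_ne volume 0] with t ht0 ht
  rw [Set.uIoc_of_le (neg_nonpos.2 ha)] at ht
  exact hf.eq_zero_of_neg t (lt_of_le_of_ne ht.2 ht0)

/- Integrate `g t = ∑ i, w i * (f t - f (t - ℓ i))` over `[0, x]`. -/
theorem hasSum_integral [Countable ι] (hf : IsRenewalSolution w ℓ g f) (hw1 : HasSum w 1)
    (hℓ : ∀ i, 0 ≤ ℓ i) (hmeas : Measurable f) (hC : ∀ x, |f x| ≤ C) {x : ℝ} (hx : 0 ≤ x) :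
    HasSum (fun i => w i * ∫ t in (x - ℓ i)..x, f t) (∫ t in 0..x, g t) := by
  have integrable (a b : ℝ) : IntervalIntegrable f volume a b :=
    intervalIntegrable_of_abs_le hmeas hC a b
  have integrable_shift (i : ι) : IntervalIntegrable (fun t => f (t - ℓ i)) volume 0 x :=
    intervalIntegrable_of_abs_le (hmeas.comp (measurable_id.sub_const _)) (fun _ => hC _) 0 x
  have integral_diff (i : ι) : ∫ t in 0..x, w i * (f t - f (t - ℓ i)) =
      w i * ∫ t in (x - ℓ i)..x, f t := by
    rw [intervalIntegral.integral_const_mul,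
      intervalIntegral.integral_sub (integrable _ _) (integrable_shift i),
      intervalIntegral.integral_comp_sub_right,
      intervalIntegral.integral_interval_sub_interval_comm' (integrable _ _) (integrable _ _)
      (integrable _ _), zero_sub, hf.integral_neg_zero_eq_zero (hℓ i), sub_zero]
  simp_rw [← integral_diff]
  refine intervalIntegral.hasSum_integral_of_dominated_convergence (fun i _ => |w i| * (C + C))
    (fun i => ?_) (fun i => .of_forall fun t _ => ?_)
    (.of_forall fun t _ => hw1.summable.abs.mul_right _) (by simp) (.of_forall fun t ht => ?_)
  · exact ((hmeas.sub (hmeas.comp (measurable_id.sub_const _))).const_mul _).aestronglyMeasurable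
  · rw [norm_mul, Real.norm_eq_abs, Real.norm_eq_abs]
    gcongr
    exact (abs_sub _ _).trans (add_le_add (hC _) (hC _))
  · have ht0 : 0 ≤ t := by
      rw [Set.uIoc_of_le hx] at ht
      exact ht.1.le
    have hsum := (summable_mul_of_abs_le hw1.summable fun i => hC (t - ℓ i)).hasSum
    have := (hw1.mul_right (f t)).sub hsum
    simpa [mul_sub, hf.eq_tsum_add t ht0] using this

theorem eq_div_of_tendsto_comp_sub [Countable ι] (hf : IsRenewalSolution w ℓ g f)
    (hw1 : HasSum w 1) (hℓ : ∀ i, 0 ≤ ℓ i) (hm : HasSum (fun i => w i * ℓ i) m) (hm0 : m ≠ 0)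
    (hmeas : Measurable f) (hC : ∀ x, |f x| ≤ C)
    (hG : Tendsto (fun x => ∫ t in 0..x, g t) atTop (𝓝 G)) {z : ℕ → ℝ} (hz : Tendsto z atTop atTop)
    (hzM : ∀ y ≥ 0, Tendsto (fun n => f (z n - y)) atTop (𝓝 M)) : M = G / m := by
  have tendsto_tsum : Tendsto (fun n => ∑' i, w i * ∫ t in (z n - ℓ i)..(z n), f t) atTop
      (𝓝 (∑' i, w i * (ℓ i * M))) := by
    refine tendsto_tsum_of_dominated_convergence (hm.summable.abs.mul_right C)
      (fun i => (tendsto_integral_sub (hℓ i) hmeas hC hzM).const_mul _) (.of_forall fun n i => ?_)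
    have := intervalIntegral.norm_integral_le_of_norm_le_const (f := f) (a := z n - ℓ i) (b := z n)
      fun t _ => hC t
    rw [sub_sub_cancel, mul_comm] at this
    rw [norm_mul, abs_mul, mul_assoc, Real.norm_eq_abs]
    gcongr
  have tsum_eq : ∑' i, w i * (ℓ i * M) = m * M := by
    simpa only [mul_assoc] using (hm.mul_right M).tsum_eq
  have hmM : G = m * M := by
    refine tendsto_nhds_unique (hG.comp hz) ((tsum_eq ▸ tendsto_tsum).congr' ?_)
    filter_upwards [hz.eventually_ge_atTop 0] with n hn
    exact (hf.hasSum_integral hw1 hℓ hmeas hC hn).tsum_eq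
  rw [hmM, mul_div_cancel_left₀ _ hm0]

theorem tendsto_atTop [Countable ι] (hf : IsRenewalSolution w ℓ g f) (hw : ∀ i, 0 < w i)
    (hw1 : HasSum w 1) (hℓ : ∀ i, 0 < ℓ i) (hm : HasSum (fun i => w i * ℓ i) m)
    (hd : Dense (AddSubgroup.closure (Set.range ℓ) : Set ℝ)) (hmeas : Measurable f)
    (hC : ∀ x, |f x| ≤ C) (hslow : SlowlyDecreasing f) (hg : Tendsto g atTop (𝓝 0))
    (hG : Tendsto (fun x => ∫ t in 0..x, g t) atTop (𝓝 G)) : Tendsto f atTop (𝓝 (G / m)) := by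
  obtain ⟨i⟩ : Nonempty ι := by
    by_contra! h
    exact zero_ne_one (hasSum_empty.unique hw1)
  have mean_pos : 0 < m :=
    hasSum_lt (fun j => (mul_pos (hw j) (hℓ j)).le) (mul_pos (hw i) (hℓ i)) hasSum_zero hm
  have hS : EventuallyDense (AddSubmonoid.closure (Set.range ℓ)) :=
    eventuallyDense_closure ⟨ℓ i, i, rfl⟩ (Set.forall_mem_range.2 hℓ) hd
  have eq_div {L : ℝ} (hL : ∃ F : Filter ℝ, F.NeBot ∧ F ≤ atTop ∧
      ∀ s ∈ AddSubmonoid.closure (Set.range ℓ), Tendsto (fun x => f (x - s)) F (𝓝 L)) :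
      L = G / m := by
    obtain ⟨F, _, hFtop, hF⟩ := hL
    obtain ⟨z, hz, hzL⟩ := hslow.exists_seq_tendsto hS hFtop hF
    exact hf.eq_div_of_tendsto_comp_sub hw1 (fun j => (hℓ j).le) hm mean_pos.ne' hmeas hC hG hz hzL
  exact tendsto_of_liminf_eq_limsup
    (eq_div (hf.exists_filter_tendsto_comp_sub_liminf hw hw1 hC hg))
    (eq_div (hf.exists_filter_tendsto_comp_sub_limsup hw hw1 hC hg))
    (isBoundedUnder_of ⟨C, fun x => (abs_le.1 (hC x)).2⟩)
    (isBoundedUnder_of ⟨-C, fun x => (abs_le.1 (hC x)).1⟩)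

end IsRenewalSolution

end RenewalEquation

section Tuples

variable {P : Set ℕ} {m N : ℕ}

open Classical in
/-- The elements of `P` in `[1, N]`, the index set of the recursion satisfied by `Acum P N`. -/
def elementsLE (P : Set ℕ) (N : ℕ) : Finset ℕ := {p ∈ Finset.Icc 1 N | p ∈ P}

theorem mem_elementsLE {p : ℕ} : p ∈ elementsLE P N ↔ (1 ≤ p ∧ p ≤ N) ∧ p ∈ P := by
  simp [elementsLE]

/-- The `m`-tuples of elements of `P` with product at most `N`. Each entry is at most the product as
long as `0 ∉ P`, so bounding the entries by `N` only serves finiteness. -/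
def tuplesLE (P : Set ℕ) (m N : ℕ) : Finset (Fin m → ℕ) :=
  {t ∈ Fintype.piFinset fun _ => elementsLE P N | ∏ i, t i ≤ N}

theorem mem_tuplesLE (hP : 0 ∉ P) {t : Fin m → ℕ} :
    t ∈ tuplesLE P m N ↔ (∀ i, t i ∈ P) ∧ ∏ i, t i ≤ N := by
  simp only [tuplesLE, Finset.mem_filter, Fintype.mem_piFinset, mem_elementsLE]
  refine ⟨fun ⟨h, hprod⟩ => ⟨fun i => (h i).2, hprod⟩, fun ⟨h, hprod⟩ => ⟨fun i => ?_, hprod⟩⟩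
  have pos (j : Fin m) : 0 < t j := Nat.pos_of_ne_zero fun h0 => hP (h0 ▸ h j)
  have le_prod : t i ≤ ∏ j, t j := Finset.single_le_prod' (fun j _ => pos j) (Finset.mem_univ i)
  exact ⟨⟨pos i, le_prod.trans hprod⟩, h i⟩

theorem prod_pos_of_forall_mem (hP : 0 ∉ P) {t : Fin m → ℕ} (ht : ∀ i, t i ∈ P) : 0 < ∏ i, t i :=
  Finset.prod_pos fun i _ => Nat.pos_of_ne_zero fun h => hP (h ▸ ht i)

theorem cons_mem_tuplesLE (hP : 0 ∉ P) {p : ℕ} {t : Fin m → ℕ} :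
    Fin.cons p t ∈ tuplesLE P (m + 1) N ↔ p ∈ elementsLE P N ∧ t ∈ tuplesLE P m (N / p) := by
  rw [mem_tuplesLE hP, mem_tuplesLE hP, mem_elementsLE, Fin.forall_fin_succ, Fin.prod_univ_succ]
  simp only [Fin.cons_zero, Fin.cons_succ]
  refine ⟨fun ⟨⟨hp, ht⟩, hle⟩ => ?_, fun ⟨⟨⟨hp1, _⟩, hp⟩, ht, hle⟩ => ⟨⟨hp, ht⟩, ?_⟩⟩
  · have p_pos : 0 < p := Nat.pos_of_ne_zero fun h => hP (h ▸ hp)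
    exact ⟨⟨⟨p_pos, (Nat.le_mul_of_pos_right p (prod_pos_of_forall_mem hP ht)).trans hle⟩, hp⟩, ht,
      (Nat.le_div_iff_mul_le p_pos).2 (by rwa [mul_comm])⟩
  · rw [mul_comm]
    exact (Nat.le_div_iff_mul_le hp1).1 hle

theorem card_tuplesLE_succ (hP : 0 ∉ P) (m N : ℕ) :
    (tuplesLE P (m + 1) N).card = ∑ p ∈ elementsLE P N, (tuplesLE P m (N / p)).card := by
  rw [← Finset.card_sigma]
  refine Finset.card_nbij' (fun t => ⟨t 0, Fin.tail t⟩) (fun q => Fin.cons q.1 q.2) ?_ ?_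
    (fun t _ => Fin.cons_self_tail t) fun q _ => by simp
  · intro t ht
    rw [Finset.mem_coe, ← Fin.cons_self_tail t, cons_mem_tuplesLE hP] at ht
    exact Finset.mem_sigma.2 ht
  · exact fun q hq => (cons_mem_tuplesLE hP).2 (Finset.mem_sigma.1 hq)

theorem card_tuplesLE_zero (hN : 1 ≤ N) : (tuplesLE P 0 N).card = 1 := by
  simp [tuplesLE, Finset.filter_true_of_mem, hN]

theorem sum_af_eq_card_tuplesLE (hP : 0 ∉ P) (m N : ℕ) :
    ∑ n ∈ Finset.Icc 1 N, af P m n = (tuplesLE P m N).card := by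
  rw [Finset.card_eq_sum_card_fiberwise (f := fun t => ∏ i, t i) (t := Finset.Icc 1 N)]
  · refine Finset.sum_congr rfl fun n hn => ?_
    rw [af, ← Nat.card_eq_finsetCard]
    refine Nat.card_congr (Equiv.subtypeEquivRight fun t => ?_)
    rw [Finset.mem_filter, mem_tuplesLE hP]
    grind
  · intro t ht
    obtain ⟨htP, hle⟩ := (mem_tuplesLE hP).1 ht
    exact Finset.mem_Icc.2 ⟨prod_pos_of_forall_mem hP htP, hle⟩

theorem af_eq_zero_of_le (hP : ∀ n ∈ P, 2 ≤ n) {m n : ℕ} (hnm : n ≤ m) :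
    af P m n = 0 := by
  refine Nat.card_eq_zero.2 (.inl ⟨fun ⟨t, ht, hprod⟩ => ?_⟩)
  have : 2 ^ m ≤ n := calc
    2 ^ m = ∏ _i : Fin m, 2 := by simp
    _ ≤ ∏ i, t i := Finset.prod_le_prod' fun i _ => hP _ (ht i)
    _ = n := hprod
  exact (hnm.trans_lt Nat.lt_two_pow_self).not_ge this

end Tuples

section Acum

variable {P : Set ℕ} {N : ℕ}

theorem Acum_zero (P : Set ℕ) : Acum P 0 = 0 := by
  simp [Acum]

theorem hasSum_card_tuplesLE (hP : ∀ n ∈ P, 2 ≤ n) (N : ℕ) :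
    HasSum (fun m => ((tuplesLE P m N).card : ℝ)) (Acum P N) := by
  have h0 : 0 ∉ P := fun h => by simpa using hP 0 h
  simp_rw [← sum_af_eq_card_tuplesLE h0, Nat.cast_sum]
  refine hasSum_sum fun n _ => (summable_of_ne_finset_zero (s := Finset.range n) ?_).hasSum
  intro m hm
  rw [af_eq_zero_of_le hP (by simpa using hm), Nat.cast_zero]

theorem Acum_eq_one_add_sum (hP : ∀ n ∈ P, 2 ≤ n) (hN : 1 ≤ N) :
    Acum P N = 1 + ∑ p ∈ elementsLE P N, Acum P (N / p) := by
  have h0 : 0 ∉ P := fun h => by simpa using hP 0 h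
  have hsucc : HasSum (fun m => ((tuplesLE P (m + 1) N).card : ℝ))
      (∑ p ∈ elementsLE P N, Acum P (N / p)) := by
    simp_rw [card_tuplesLE_succ h0, Nat.cast_sum]
    exact hasSum_sum fun p _ => hasSum_card_tuplesLE hP (N / p)
  have hcount := HasSum.zero_add (f := fun m => ((tuplesLE P m N).card : ℝ)) hsucc
  rw [card_tuplesLE_zero hN, Nat.cast_one] at hcount
  exact (hasSum_card_tuplesLE hP N).unique hcount

theorem aTot_nonneg (P : Set ℕ) (n : ℕ) : 0 ≤ aTot P n :=
  tsum_nonneg fun _ => Nat.cast_nonneg _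

theorem Acum_nonneg (P : Set ℕ) (N : ℕ) : 0 ≤ Acum P N :=
  Finset.sum_nonneg fun n _ => aTot_nonneg P n

theorem monotone_Acum (P : Set ℕ) : Monotone (Acum P) := fun _ _ h =>
  Finset.sum_le_sum_of_subset_of_nonneg (Finset.Icc_subset_Icc_right h) fun n _ _ => aTot_nonneg P n

theorem Acum_eq_one_add_tsum (hP : ∀ n ∈ P, 2 ≤ n) (hN : 1 ≤ N) :
    Acum P N = 1 + ∑' p : P, Acum P (N / p) := by
  rw [Acum_eq_one_add_sum hP hN, tsum_subtype P fun p => Acum P (N / p),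
    tsum_eq_sum (s := elementsLE P N)]
  · congr 1
    refine Finset.sum_congr rfl fun p hp => ?_
    rw [Set.indicator_of_mem (mem_elementsLE.1 hp).2]
  · intro p hp
    refine Set.indicator_apply_eq_zero.2 fun hpP => ?_
    have : N < p := by
      by_contra! hpN
      exact hp (mem_elementsLE.2 ⟨⟨by linarith [hP p hpP], hpN⟩, hpP⟩)
    rw [Nat.div_eq_of_lt this, Acum_zero]

theorem exists_le_mul_rpow_of_le_sum_div (hP : ∀ n ∈ P, 2 ≤ n) {ρ : ℝ} (hρ : 0 ≤ ρ)
    (hsum : ∀ s : Finset ℕ, ↑s ⊆ P → ∑ p ∈ s, (p : ℝ) ^ (-ρ) ≤ 1) {B : ℕ → ℝ} {K : ℕ}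
    (hB : ∀ N ≥ K, B N ≤ ∑ p ∈ elementsLE P N, B (N / p)) :
    ∃ C ≥ 0, ∀ N ≥ 1, B N ≤ C * (N : ℝ) ^ ρ := by
  set C := ∑ n ∈ Finset.range K, |B n|
  have hC : 0 ≤ C := Finset.sum_nonneg fun n _ => abs_nonneg _
  refine ⟨C, hC, fun N hN => ?_⟩
  induction N using Nat.strong_induction_on with
  | _ N ih =>
  rcases lt_or_ge N K with hNK | hKN
  · calc B N ≤ |B N| := le_abs_self _
      _ ≤ C := Finset.single_le_sum (f := fun n => |B n|) (fun n _ => abs_nonneg _)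
        (Finset.mem_range.2 hNK)
      _ ≤ C * (N : ℝ) ^ ρ :=
        le_mul_of_one_le_right hC (Real.one_le_rpow (Nat.one_le_cast.2 hN) hρ)
  have le_summand {p : ℕ} (hp : p ∈ elementsLE P N) :
      B (N / p) ≤ C * (N : ℝ) ^ ρ * (p : ℝ) ^ (-ρ) := by
    obtain ⟨⟨hp1, hpN⟩, hpP⟩ := mem_elementsLE.1 hp
    calc B (N / p) ≤ C * ((N / p : ℕ) : ℝ) ^ ρ :=
          ih _ (Nat.div_lt_self hN (hP p hpP)) (Nat.div_pos hpN hp1)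
      _ ≤ C * ((N : ℝ) / p) ^ ρ := by gcongr; exact Nat.cast_div_le
      _ = C * (N : ℝ) ^ ρ * (p : ℝ) ^ (-ρ) := by
        rw [Real.div_rpow (by positivity) (by positivity), Real.rpow_neg (by positivity)]
        ring
  calc B N ≤ ∑ p ∈ elementsLE P N, B (N / p) := hB N hKN
    _ ≤ ∑ p ∈ elementsLE P N, C * (N : ℝ) ^ ρ * (p : ℝ) ^ (-ρ) :=
      Finset.sum_le_sum fun p hp => le_summand hp
    _ = C * (N : ℝ) ^ ρ * ∑ p ∈ elementsLE P N, (p : ℝ) ^ (-ρ) := by rw [Finset.mul_sum]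
    _ ≤ C * (N : ℝ) ^ ρ :=
      mul_le_of_le_one_right (by positivity) (hsum _ fun p hp => (mem_elementsLE.1 hp).2)

/- `Acum` itself violates `B N ≤ ∑ p, B (N / p)` by the inhomogeneity `1`; adding a constant gains
one unit per element of `P`, of which there are at least two. -/
theorem exists_Acum_le_mul_rpow (hP : ∀ n ∈ P, 2 ≤ n) (hP2 : P.Nontrivial) {ρ : ℝ} (hρ : 0 ≤ ρ)
    (hsum : ∀ s : Finset ℕ, ↑s ⊆ P → ∑ p ∈ s, (p : ℝ) ^ (-ρ) ≤ 1) :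
    ∃ C ≥ 0, ∀ N : ℕ, N ≥ 1 → Acum P N ≤ C * (N : ℝ) ^ ρ := by
  obtain ⟨p, hp, q, hq, hpq⟩ := hP2
  have mem {N r : ℕ} (hr : r ∈ P) (hrN : r ≤ N) : r ∈ elementsLE P N :=
    mem_elementsLE.2 ⟨⟨by linarith [hP r hr], hrN⟩, hr⟩
  have le_sum (N : ℕ) (hN : N ≥ max p q) :
      Acum P N + 1 ≤ ∑ p ∈ elementsLE P N, (Acum P (N / p) + 1) := by
    have hpN : p ≤ N := (le_max_left p q).trans hN
    have hqN : q ≤ N := (le_max_right p q).trans hN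
    have two_le_card : (2 : ℝ) ≤ (elementsLE P N).card := by
      exact_mod_cast Finset.one_lt_card.2 ⟨p, mem hp hpN, q, mem hq hqN, hpq⟩
    rw [Acum_eq_one_add_sum hP (by linarith [hP p hp]), Finset.sum_add_distrib, Finset.sum_const,
      nsmul_one]
    linarith
  obtain ⟨C, hC, hle⟩ := exists_le_mul_rpow_of_le_sum_div hP hρ hsum le_sum
  exact ⟨C, hC, fun N hN => (le_add_of_nonneg_right zero_le_one).trans (hle N hN)⟩

end Acum

section DenseLogs

theorem exists_rat_exp_eq_of_mem_closure {X : Set ℝ} (hX : ∀ x ∈ X, ∃ q : ℚ, Real.exp x = q)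
    {x : ℝ} (hx : x ∈ AddSubgroup.closure X) : ∃ q : ℚ, Real.exp x = q := by
  induction hx using AddSubgroup.closure_induction with
  | mem x hx => exact hX x hx
  | zero => exact ⟨1, by simp⟩
  | add x y _ _ hx hy =>
    obtain ⟨q, hq⟩ := hx
    obtain ⟨r, hr⟩ := hy
    exact ⟨q * r, by rw [Real.exp_add, hq, hr, Rat.cast_mul]⟩
  | neg x _ hx =>
    obtain ⟨q, hq⟩ := hx
    exact ⟨q⁻¹, by rw [Real.exp_neg, hq, Rat.cast_inv]⟩

theorem exists_natCast_eq_of_pow_eq_natCast {q : ℚ} (hq : 0 ≤ q) {k n : ℕ} (hk : 0 < k)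
    (hqn : q ^ k = n) : ∃ d : ℕ, (d : ℚ) = q := by
  have hint : IsIntegral ℤ (q ^ k) := hqn ▸ isIntegral_natCast n
  obtain ⟨z, rfl⟩ := IsIntegrallyClosed.exists_algebraMap_eq_of_isIntegral_pow hk hint
  lift z to ℕ using by simpa using hq
  exact ⟨z, by simp⟩

theorem exists_pow_eq_natCast_of_log_mem_zmultiples {a : ℝ} {q : ℚ} (ha : 0 ≤ a)
    (hq : Real.exp a = q) {n : ℕ} (hn : 2 ≤ n) (hlog : Real.log n ∈ AddSubgroup.zmultiples a) :
    ∃ k : ℕ, 0 < k ∧ q ^ k = n := by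
  obtain ⟨k, hk : k • a = Real.log n⟩ := hlog
  have log_pos : 0 < Real.log n := Real.log_pos (by exact_mod_cast hn)
  have k_pos : 0 < k := by
    by_contra! hk0
    exact log_pos.not_ge (hk ▸ smul_nonpos_of_nonpos_of_nonneg hk0 ha)
  lift k to ℕ using k_pos.le
  refine ⟨k, by exact_mod_cast k_pos, ?_⟩
  have : ((q ^ k : ℚ) : ℝ) = n := by
    rw [Rat.cast_pow, ← hq, ← Real.exp_nsmul, ← natCast_zsmul, hk, Real.exp_log (by positivity)]
  exact_mod_cast this

theorem exists_subset_pow_of_closure_log_eq_zmultiples {P : Set ℕ} (hP : ∀ n ∈ P, 2 ≤ n)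
    (hne : P.Nonempty) {a : ℝ} (ha : 0 ≤ a)
    (hclosure : AddSubgroup.closure (Set.range fun n : P => Real.log n) =
      AddSubgroup.zmultiples a) :
    ∃ d : ℕ, 2 ≤ d ∧ P ⊆ {n : ℕ | ∃ k : ℕ, 1 ≤ k ∧ n = d ^ k} := by
  obtain ⟨q, hq⟩ : ∃ q : ℚ, Real.exp a = q := by
    refine exists_rat_exp_eq_of_mem_closure (X := Set.range fun n : P => Real.log n) ?_
      (hclosure ▸ AddSubgroup.mem_zmultiples a)
    rintro _ ⟨n, rfl⟩
    exact ⟨n, by rw [Real.exp_log (by exact_mod_cast two_pos.trans_le (hP n n.2))]; simp⟩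
  have eq_pow {n : ℕ} (hn : n ∈ P) : ∃ k : ℕ, 0 < k ∧ q ^ k = n :=
    exists_pow_eq_natCast_of_log_mem_zmultiples ha hq (hP n hn)
      (hclosure ▸ AddSubgroup.subset_closure ⟨⟨n, hn⟩, rfl⟩)
  obtain ⟨n, hn⟩ := hne
  obtain ⟨k, hk, hkn⟩ := eq_pow hn
  have q_pos : 0 < q := by exact_mod_cast hq ▸ Real.exp_pos a
  obtain ⟨d, rfl⟩ := exists_natCast_eq_of_pow_eq_natCast q_pos.le hk hkn
  refine ⟨d, ?_, fun n hn => ?_⟩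
  · have : d ^ k = n := by exact_mod_cast hkn
    have : 1 < d ^ k := this ▸ hP n hn
    exact (Nat.one_lt_pow_iff hk.ne').1 this
  · obtain ⟨k, hk, hkn⟩ := eq_pow hn
    exact ⟨k, hk, by exact_mod_cast hkn.symm⟩

theorem dense_closure_log {P : Set ℕ} (hP : ∀ n ∈ P, 2 ≤ n) (hne : P.Nonempty)
    (hnp : ∀ d : ℕ, 2 ≤ d → ¬ P ⊆ {n : ℕ | ∃ k : ℕ, 1 ≤ k ∧ n = d ^ k}) :
    Dense (AddSubgroup.closure (Set.range fun n : P => Real.log n) : Set ℝ) := by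
  refine (AddSubgroup.dense_or_cyclic _).resolve_right ?_
  rintro ⟨a, ha⟩
  rw [← AddSubgroup.zmultiples_eq_closure] at ha
  have habs : AddSubgroup.zmultiples |a| = AddSubgroup.zmultiples a := by
    rcases abs_choice a with h | h <;> simp [h]
  obtain ⟨d, hd, hsub⟩ :=
    exists_subset_pow_of_closure_log_eq_zmultiples hP hne (abs_nonneg a) (ha.trans habs.symm)
  exact hnp d hd hsub

theorem nontrivial_of_forall_not_subset_pow {P : Set ℕ} (hP : ∀ n ∈ P, 2 ≤ n)
    (hnp : ∀ d : ℕ, 2 ≤ d → ¬ P ⊆ {n : ℕ | ∃ k : ℕ, 1 ≤ k ∧ n = d ^ k}) : P.Nontrivial := by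
  by_contra h
  rcases (Set.not_nontrivial_iff.1 h).eq_empty_or_singleton with rfl | ⟨d, rfl⟩
  · exact hnp 2 le_rfl (Set.empty_subset _)
  · exact hnp d (hP d rfl) (Set.singleton_subset_iff.2 ⟨1, le_rfl, (pow_one d).symm⟩)

end DenseLogs

section NormalizedCount

variable {P : Set ℕ} {ρ C : ℝ}

theorem slowlyDecreasing_exp_mul_of_monotone {u : ℝ → ℝ} (hu : Monotone u) (hρ : 0 ≤ ρ)
    (hC : ∀ x, Real.exp (-ρ * x) * u x ≤ C) :
    SlowlyDecreasing fun x => Real.exp (-ρ * x) * u x := by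
  intro δ hδ
  refine ⟨δ / ((ρ + 1) * (|C| + 1)), by positivity, fun x h ⟨h_nonneg, h_le⟩ => ?_⟩
  have decay_le_one : Real.exp (-ρ * h) ≤ 1 := Real.exp_le_one_iff.2 (by nlinarith)
  have one_sub_le : 1 - Real.exp (-ρ * h) ≤ ρ * h := by linarith [Real.add_one_le_exp (-ρ * h)]
  have loss : (1 - Real.exp (-ρ * h)) * (Real.exp (-ρ * x) * u x) ≤ δ :=
    calc (1 - Real.exp (-ρ * h)) * (Real.exp (-ρ * x) * u x)
        ≤ (1 - Real.exp (-ρ * h)) * (|C| + 1) :=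
          mul_le_mul_of_nonneg_left (by linarith [hC x, le_abs_self C]) (by linarith)
      _ ≤ (ρ + 1) * h * (|C| + 1) := by gcongr; linarith
      _ = h * ((ρ + 1) * (|C| + 1)) := by ring
      _ ≤ δ := (le_div_iff₀ (by positivity)).1 h_le
  have decay : Real.exp (-ρ * h) * (Real.exp (-ρ * x) * u x)
      ≤ Real.exp (-ρ * (x + h)) * u (x + h) := by
    rw [← mul_assoc, ← Real.exp_add, show -ρ * h + -ρ * x = -ρ * (x + h) by ring]
    gcongr
    exact hu (by linarith)
  linarith

theorem tendsto_exp_neg_mul_atTop (hρ : 0 < ρ) :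
    Tendsto (fun x => Real.exp (-ρ * x)) atTop (𝓝 0) :=
  Real.tendsto_exp_atBot.comp (tendsto_id.const_mul_atTop_of_neg (neg_lt_zero.2 hρ))

theorem tendsto_integral_exp_neg_mul_atTop (hρ : 0 < ρ) :
    Tendsto (fun x => ∫ t in 0..x, Real.exp (-ρ * t)) atTop (𝓝 (1 / ρ)) := by
  have integral_eq (x : ℝ) :
      ∫ t in 0..x, Real.exp (-ρ * t) = (1 - Real.exp (-ρ * x)) / ρ := by
    rw [intervalIntegral.integral_comp_mul_left _ (neg_ne_zero.2 hρ.ne'), integral_exp, mul_zero,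
      Real.exp_zero, smul_eq_mul]
    field_simp
    ring
  simp only [integral_eq]
  simpa using ((tendsto_exp_neg_mul_atTop hρ).const_sub 1).div_const ρ

theorem hasSum_of_Pval_eq_one (h : Pval P ρ = 1) : HasSum (fun n : P => (n : ℝ) ^ (-ρ)) 1 := by
  have hsum : Summable fun n : P => (n : ℝ) ^ (-ρ) := by
    by_contra hns
    exact zero_ne_one ((tsum_eq_zero_of_not_summable hns).symm.trans h)
  exact h ▸ hsum.hasSum

theorem summable_rpow_mul_log {r : ℝ} (hr : Summable fun n : P => (n : ℝ) ^ (-r)) (hrρ : r < ρ) :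
    Summable fun n : P => (n : ℝ) ^ (-ρ) * Real.log n := by
  refine Summable.of_nonneg_of_le (fun n => by positivity) (fun n => ?_)
    (hr.mul_right (1 / (ρ - r)))
  rcases (n : ℕ).eq_zero_or_pos with hn | hn
  · rw [hn, Nat.cast_zero, Real.log_zero, mul_zero]
    exact mul_nonneg (Real.rpow_nonneg le_rfl _) (one_div_nonneg.2 (sub_pos.2 hrρ).le)
  calc (n : ℝ) ^ (-ρ) * Real.log n
      ≤ (n : ℝ) ^ (-ρ) * ((n : ℝ) ^ (ρ - r) / (ρ - r)) := by
        gcongr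
        exact Real.log_le_rpow_div (Nat.cast_nonneg _) (sub_pos.2 hrρ)
    _ = (n : ℝ) ^ (-r) * (1 / (ρ - r)) := by
        rw [mul_div_assoc', ← Real.rpow_add (by exact_mod_cast hn), mul_one_div]
        ring_nf

theorem summable_rpow_mul_log_of_kappa_lt (h : kappa P < ρ) :
    Summable fun n : P => (n : ℝ) ^ (-ρ) * Real.log n := by
  obtain ⟨_, ⟨r, rfl, hr⟩, hrρ⟩ := sInf_lt_iff.1 h
  exact summable_rpow_mul_log hr (by exact_mod_cast hrρ)

/-- The counting function in exponential scale, `x ↦ e^{-ρx} A(e^x)`, whose limit at `∞` is the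
constant in `A(N) ∼ c N^ρ`. -/
def normalizedAcum (P : Set ℕ) (ρ x : ℝ) : ℝ :=
  Real.exp (-ρ * x) * Acum P ⌊Real.exp x⌋₊

theorem monotone_Acum_floor_exp (P : Set ℕ) : Monotone fun x : ℝ => Acum P ⌊Real.exp x⌋₊ :=
  fun _ _ hxy => monotone_Acum P (Nat.floor_mono (Real.exp_le_exp.2 hxy))

theorem measurable_normalizedAcum (P : Set ℕ) (ρ : ℝ) : Measurable (normalizedAcum P ρ) :=
  (by fun_prop : Measurable fun x : ℝ => Real.exp (-ρ * x)).mul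
    (monotone_Acum_floor_exp P).measurable

theorem normalizedAcum_eq_zero_of_neg (P : Set ℕ) (ρ : ℝ) {x : ℝ} (hx : x < 0) :
    normalizedAcum P ρ x = 0 := by
  rw [normalizedAcum, Nat.floor_eq_zero.2 (Real.exp_lt_one_iff.2 hx), Acum_zero, mul_zero]

theorem abs_normalizedAcum_le (hρ : 0 ≤ ρ) (hC0 : 0 ≤ C)
    (hC : ∀ N : ℕ, N ≥ 1 → Acum P N ≤ C * (N : ℝ) ^ ρ) (x : ℝ) : |normalizedAcum P ρ x| ≤ C := by
  rcases lt_or_ge x 0 with hx | hx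
  · rwa [normalizedAcum_eq_zero_of_neg P ρ hx, abs_zero]
  rw [normalizedAcum, abs_of_nonneg (mul_nonneg (Real.exp_pos _).le (Acum_nonneg P _))]
  calc Real.exp (-ρ * x) * Acum P ⌊Real.exp x⌋₊
      ≤ Real.exp (-ρ * x) * (C * (⌊Real.exp x⌋₊ : ℝ) ^ ρ) := by
        gcongr
        exact hC _ ((Nat.one_le_floor_iff _).2 (Real.one_le_exp hx))
    _ ≤ Real.exp (-ρ * x) * (C * Real.exp x ^ ρ) := by
        gcongr
        exact Nat.floor_le (Real.exp_pos _).le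
    _ = C := by
        rw [← Real.exp_mul, mul_left_comm, ← Real.exp_add, show -ρ * x + x * ρ = 0 by ring,
          Real.exp_zero, mul_one]

theorem isRenewalSolution_normalizedAcum (hP : ∀ n ∈ P, 2 ≤ n) (ρ : ℝ) :
    IsRenewalSolution (fun n : P => (n : ℝ) ^ (-ρ)) (fun n : P => Real.log n)
      (fun x => Real.exp (-ρ * x)) (normalizedAcum P ρ) where
  eq_zero_of_neg _ hx := normalizedAcum_eq_zero_of_neg P ρ hx
  eq_tsum_add x hx := by
    have one_le_floor : 1 ≤ ⌊Real.exp x⌋₊ := (Nat.one_le_floor_iff _).2 (Real.one_le_exp hx)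
    have shift (n : P) : (n : ℝ) ^ (-ρ) * normalizedAcum P ρ (x - Real.log n)
        = Real.exp (-ρ * x) * Acum P (⌊Real.exp x⌋₊ / n) := by
      have n_pos : (0 : ℝ) < n := by exact_mod_cast two_pos.trans_le (hP n n.2)
      rw [normalizedAcum, Real.exp_sub, Real.exp_log n_pos, Nat.floor_div_natCast, ← mul_assoc,
        Real.rpow_def_of_pos n_pos, ← Real.exp_add]
      ring_nf
    simp only [shift]
    rw [normalizedAcum, Acum_eq_one_add_tsum hP one_le_floor, tsum_mul_left]
    ring

theorem normalizedAcum_log_mul_rpow (P : Set ℕ) (ρ : ℝ) {N : ℕ} (hN : 0 < N) :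
    normalizedAcum P ρ (Real.log N) * (N : ℝ) ^ ρ = Acum P N := by
  have N_pos : (0 : ℝ) < N := by exact_mod_cast hN
  rw [normalizedAcum, Real.exp_log N_pos, Nat.floor_natCast, Real.rpow_def_of_pos N_pos,
    mul_right_comm, ← Real.exp_add, show -ρ * Real.log N + Real.log N * ρ = 0 by ring,
    Real.exp_zero, one_mul]

theorem tendsto_normalizedAcum (hP : ∀ n ∈ P, 2 ≤ n) (hρ : 0 < ρ) (hone : Pval P ρ = 1)
    (hlog : Summable fun n : P => (n : ℝ) ^ (-ρ) * Real.log n)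
    (hnp : ∀ d : ℕ, 2 ≤ d → ¬ P ⊆ {n : ℕ | ∃ k : ℕ, 1 ≤ k ∧ n = d ^ k}) :
    Tendsto (normalizedAcum P ρ) atTop (𝓝 (1 / ρ / -Pderiv1 P ρ)) := by
  have hP2 := nontrivial_of_forall_not_subset_pow hP hnp
  have hw := hasSum_of_Pval_eq_one hone
  have sum_le_one (s : Finset ℕ) (hs : ↑s ⊆ P) : ∑ p ∈ s, (p : ℝ) ^ (-ρ) ≤ 1 := by
    classical
    rw [← Finset.sum_subtype_of_mem _ hs]
    exact sum_le_hasSum _ (fun n _ => by positivity) hw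
  obtain ⟨C, C_nonneg, Acum_le⟩ := exists_Acum_le_mul_rpow hP hP2 hρ.le sum_le_one
  have bound := abs_normalizedAcum_le hρ.le C_nonneg Acum_le
  have hm : HasSum (fun n : P => (n : ℝ) ^ (-ρ) * Real.log n) (-Pderiv1 P ρ) := by
    rw [Pderiv1, neg_neg]
    exact hlog.hasSum
  exact (isRenewalSolution_normalizedAcum hP ρ).tendsto_atTop
    (fun n => Real.rpow_pos_of_pos (by exact_mod_cast two_pos.trans_le (hP n n.2)) _) hw
    (fun n => Real.log_pos (by exact_mod_cast hP n n.2)) hm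
    (dense_closure_log hP hP2.nonempty hnp) (measurable_normalizedAcum P ρ) bound
    (slowlyDecreasing_exp_mul_of_monotone (monotone_Acum_floor_exp P) hρ.le
      fun x => (le_abs_self _).trans (bound x))
    (tendsto_exp_neg_mul_atTop hρ) (tendsto_integral_exp_neg_mul_atTop hρ)

theorem Pderiv1_neg (hP : ∀ n ∈ P, 2 ≤ n) (hne : P.Nonempty)
    (hlog : Summable fun n : P => (n : ℝ) ^ (-ρ) * Real.log n) : Pderiv1 P ρ < 0 := by
  have term_pos (n : P) : 0 < (n : ℝ) ^ (-ρ) * Real.log n :=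
    mul_pos (Real.rpow_pos_of_pos (by exact_mod_cast two_pos.trans_le (hP n n.2)) _)
      (Real.log_pos (by exact_mod_cast hP n n.2))
  exact neg_lt_zero.2 (hlog.tsum_pos (fun n => (term_pos n).le) ⟨_, hne.some_mem⟩ (term_pos _))

end NormalizedCount

theorem Acum_asymptotic_general (P : Set ℕ) (hP : ∀ n ∈ P, 2 ≤ n) (ρ : ℝ) (hρ0 : 0 < ρ)
    (hρ1 : Pval P ρ = 1) (hlog : Summable fun n : P => (n : ℝ) ^ (-ρ) * Real.log n)
    (μ : ℝ) (hμ : μ = -1 / Pderiv1 P ρ)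
    (hnp : ∀ d : ℕ, 2 ≤ d → ¬ P ⊆ {n : ℕ | ∃ k : ℕ, 1 ≤ k ∧ n = d ^ k}) :
    Asymptotics.IsEquivalent atTop
      (fun N : ℕ => Acum P N)
      (fun N : ℕ => (μ / ρ) * (N : ℝ) ^ ρ) := by
  have hneg := Pderiv1_neg hP (nontrivial_of_forall_not_subset_pow hP hnp).nonempty hlog
  have const_eq : 1 / ρ / -Pderiv1 P ρ = μ / ρ := by rw [hμ, div_right_comm, div_neg, ← neg_div]
  have const_ne_zero : μ / ρ ≠ 0 := by
    rw [← const_eq]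
    exact (div_pos (one_div_pos.2 hρ0) (neg_pos.2 hneg)).ne'
  have tendsto_log : Tendsto (fun N : ℕ => normalizedAcum P ρ (Real.log N)) atTop (𝓝 (μ / ρ)) :=
    const_eq ▸ (tendsto_normalizedAcum hP hρ0 hρ1 hlog hnp).comp
      (Real.tendsto_log_atTop.comp tendsto_natCast_atTop_atTop)
  refine (((isEquivalent_const_iff_tendsto const_ne_zero).2 tendsto_log).mul
    (IsEquivalent.refl (u := fun N : ℕ => (N : ℝ) ^ ρ))).congr_left ?_
  filter_upwards [eventually_gt_atTop 0] with N hN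
  exact normalizedAcum_log_mul_rpow P ρ hN

/-- **Asymptotics of `A(N)`.** Under the stated assumptions, including the non-periodicity
condition, `A(N) ∼ (μ/ρ) N^ρ` as `N → ∞`, where `μ/ρ = -1/(ρ 𝒫'(ρ))`. -/
theorem Acum_asymptotic
    (P : Set ℕ) (hP : ∀ n ∈ P, 2 ≤ n) (hP2 : P.Nontrivial)
    (hκ : 1 < PvalE P (kappa P))
    (ρ : ℝ) (hρ0 : 0 < ρ) (hρκ : kappa P < (ρ : EReal)) (hρ1 : Pval P ρ = 1)
    (μ : ℝ) (hμ : μ = -1 / Pderiv1 P ρ)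
    (hnp : ∀ d : ℕ, 2 ≤ d → ¬ P ⊆ {n : ℕ | ∃ k : ℕ, 1 ≤ k ∧ n = d ^ k}) :
    Asymptotics.IsEquivalent atTop
      (fun N : ℕ => Acum P N)
      (fun N : ℕ => (μ / ρ) * (N : ℝ) ^ ρ) := by
  exact Acum_asymptotic_general P hP ρ hρ0 hρ1 (summable_rpow_mul_log_of_kappa_lt hρκ) μ hμ hnp
end
end

section
/- For Re(s) > ρ, the Dirichlet series M_k(s) = Σ_{n≥1} b_k(n) n^{−s} converge absolutely for all k ≥ 0 and satisfy M_0(s) = 1/(1 − 𝒫(s)) and, for every k ≥ 1, the recurrence M_k(s) = (1/(1 − 𝒫(s))) Σ_{0≤j<k} C(k,j) M_j(s) B_{k−j}(s), where B_k(s) = Σ_{0≤ℓ≤k} C(k,ℓ) μ^{ℓ} 𝒫^{(ℓ)}(s) and C(k,j) denotes the binomial coefficient. -/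
open scoped BigOperators ENNReal
open Filter Asymptotics

noncomputable section

/-- `b_k(n) = Σ_{m ≥ 0} a_m(n) (m - μ log n)^k`. -/
def bCoef (P : Set ℕ) (μ : ℝ) (k n : ℕ) : ℝ :=
  ∑' m : ℕ, (af P m n : ℝ) * ((m : ℝ) - μ * Real.log n) ^ k

/-- The Dirichlet series `𝒫(s) = Σ_{n ∈ 𝒫} n^{-s}` at a complex point. -/
def PvalC (P : Set ℕ) (s : ℂ) : ℂ := ∑' n : P, ((n : ℕ) : ℂ) ^ (-s)

/-- The `ℓ`-th derivative `𝒫^{(ℓ)}(s) = (-1)^ℓ Σ_{n ∈ 𝒫} (log n)^ℓ n^{-s}`. -/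
def PdC (P : Set ℕ) (ℓ : ℕ) (s : ℂ) : ℂ :=
  (-1) ^ ℓ * ∑' n : P, ((Real.log (n : ℕ) : ℂ)) ^ ℓ * ((n : ℕ) : ℂ) ^ (-s)

/-- `M_k(s) = Σ_{n ≥ 1} b_k(n) n^{-s}`. -/
def Mser (P : Set ℕ) (μ : ℝ) (k : ℕ) (s : ℂ) : ℂ :=
  ∑' n : ℕ, (bCoef P μ k n : ℂ) * (n : ℂ) ^ (-s)

/-- `B_k(s) = Σ_{0 ≤ ℓ ≤ k} C(k,ℓ) μ^ℓ 𝒫^{(ℓ)}(s)`. -/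
def Bser (P : Set ℕ) (μ : ℝ) (k : ℕ) (s : ℂ) : ℂ :=
  ∑ ℓ ∈ Finset.range (k + 1), (k.choose ℓ : ℂ) * (μ : ℂ) ^ ℓ * PdC P ℓ s

/-!
A tuple of elements of `P` is a word in the alphabet `P`, and grouping words by length and product
turns `M_k(s)` into the sum over all words `l` of `X(l) ^ k * W(l)`. The weight `W(l)`, the product
of the letters to the power `-s`, is multiplicative, and the height
`X(l) = length l - μ * log (product l)` is additive. Splitting off the first letter of a nonempty
word and expanding `(X(l) + X(p)) ^ k` by the binomial theorem gives
`M_k = 0 ^ k + ∑ j ≤ k, C(k,j) M_j B_{k-j}`, which is solved for `M_k` using `B_0 = 𝒫(s)`.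

Absolute convergence comes from an exponential moment: since `𝒫(ρ) ≤ 1` and `Re s > ρ`, there is
`ε > 0` for which `exp (ε * |X(p)|) * |W(p)|` has sum less than `1` over the letters `p`. Its sum
over words is then bounded by a geometric series, and the exponential dominates every power
`|X| ^ k`.
-/

section Moments

/-- The `k`-th moment of a function `x` under a weight `w`. The series `M_k`, `B_k` and, up to sign,
`𝒫^{(k)}` are all moments, the first over `List P` and the others over `P`. -/
def moment {ι R : Type*} [CommSemiring R] [TopologicalSpace R] (w x : ι → R) (k : ℕ) : R :=
  ∑' i, x i ^ k * w i

variable {ι κ R : Type*}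

theorem moment_zero [CommSemiring R] [TopologicalSpace R] (w x : ι → R) :
    moment w x 0 = ∑' i, w i := by
  simp only [moment, pow_zero, one_mul]

theorem moment_one_add_const_mul [CommSemiring R] [TopologicalSpace R] [IsTopologicalSemiring R]
    [T2Space R] {w x : ι → R} (h : ∀ k, Summable fun i ↦ x i ^ k * w i) (c : R) (k : ℕ) :
    moment w (fun i ↦ 1 + c * x i) k =
      ∑ j ∈ Finset.range (k + 1), (k.choose j : R) * c ^ j * moment w x j := by
  have expand : ∀ i, (1 + c * x i) ^ k * w i =
      ∑ j ∈ Finset.range (k + 1), (k.choose j : R) * c ^ j * (x i ^ j * w i) := fun i ↦ by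
    rw [add_comm, add_pow, Finset.sum_mul]
    refine Finset.sum_congr rfl fun j _ ↦ ?_
    ring
  simp only [moment, expand]
  exact (hasSum_sum fun j _ ↦ (h j).hasSum.mul_left _).tsum_eq

theorem hasSum_add_pow_mul_mul [NormedCommRing R] [CompleteSpace R] {w x : ι → R} {v y : κ → R}
    (hw : ∀ k, Summable fun i ↦ ‖x i ^ k * w i‖) (hv : ∀ k, Summable fun i ↦ ‖y i ^ k * v i‖)
    (k : ℕ) :
    HasSum (fun p : ι × κ ↦ (x p.1 + y p.2) ^ k * (w p.1 * v p.2))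
      (∑ j ∈ Finset.range (k + 1), (k.choose j : R) * moment w x j * moment v y (k - j)) := by
  have term : ∀ j, HasSum
      (fun p : ι × κ ↦ (k.choose j : R) * (x p.1 ^ j * w p.1 * (y p.2 ^ (k - j) * v p.2)))
      (k.choose j * moment w x j * moment v y (k - j)) := fun j ↦ by
    rw [mul_assoc]
    have mul_summable := summable_mul_of_summable_norm (hw j) (hv (k - j))
    exact ((hw j).of_norm.hasSum.mul (hv (k - j)).of_norm.hasSum mul_summable).mul_left _
  refine (hasSum_sum fun j _ ↦ term j).congr_fun fun p ↦ ?_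
  rw [add_pow, Finset.sum_mul]
  refine Finset.sum_congr rfl fun j _ ↦ ?_
  ring

end Moments

section ExponentialMoments

variable {ι R : Type*} [NormedCommRing R] [NormOneClass R]

theorem pow_le_factorial_div_pow_mul_exp {ε y : ℝ} (hε : 0 < ε) (hy : 0 ≤ y) (k : ℕ) :
    y ^ k ≤ k.factorial / ε ^ k * Real.exp (ε * y) := by
  have h := Real.pow_div_factorial_le_exp (ε * y) (by positivity) k
  rw [div_le_iff₀ (by positivity), mul_pow] at h
  rw [div_mul_eq_mul_div, le_div_iff₀ (by positivity)]
  linarith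

theorem summable_norm_pow_mul_of_summable_exp {w x : ι → R} {ε : ℝ} (hε : 0 < ε)
    (h : Summable fun i ↦ Real.exp (ε * ‖x i‖) * ‖w i‖) (k : ℕ) :
    Summable fun i ↦ ‖x i ^ k * w i‖ := by
  refine .of_nonneg_of_le (fun i ↦ norm_nonneg _) (fun i ↦ ?_) (h.mul_left (k.factorial / ε ^ k))
  calc ‖x i ^ k * w i‖ ≤ ‖x i‖ ^ k * ‖w i‖ := by
        grw [norm_mul_le, norm_pow_le]
    _ ≤ k.factorial / ε ^ k * Real.exp (ε * ‖x i‖) * ‖w i‖ := by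
        gcongr
        exact pow_le_factorial_div_pow_mul_exp hε (norm_nonneg _) k
    _ = k.factorial / ε ^ k * (Real.exp (ε * ‖x i‖) * ‖w i‖) := mul_assoc _ _ _

end ExponentialMoments

section Lists

variable {α R : Type*}

theorem ennreal_tsum_fin_prod (f : α → ℝ≥0∞) (m : ℕ) :
    ∑' t : Fin m → α, ∏ i, f (t i) = (∑' a, f a) ^ m := by
  induction m with
  | zero => simp
  | succ m ih =>
    rw [← (Fin.consEquiv fun _ ↦ α).tsum_eq, ENNReal.tsum_prod']
    simp only [Fin.consEquiv, Equiv.coe_fn_mk, Fin.prod_univ_succ, Fin.cons_zero, Fin.cons_succ,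
      ENNReal.tsum_mul_left, ih, ENNReal.tsum_mul_right]
    rw [pow_succ']

theorem ennreal_tsum_list_prod_map (f : α → ℝ≥0∞) :
    ∑' l : List α, (l.map f).prod = (1 - ∑' a, f a)⁻¹ := by
  rw [← List.equivSigmaTuple.symm.tsum_eq, ENNReal.tsum_sigma', ← ENNReal.tsum_geometric]
  simp only [List.equivSigmaTuple, Equiv.coe_fn_symm_mk, List.map_ofFn, List.prod_ofFn,
    Function.comp_apply, ennreal_tsum_fin_prod]

theorem summable_list_prod_map {f : α → ℝ} (hf₀ : ∀ a, 0 ≤ f a) (hf : Summable f)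
    (hf₁ : ∑' a, f a < 1) : Summable fun l : List α ↦ (l.map f).prod := by
  have prod_eq : ∀ l : List α,
      (l.map fun a ↦ ENNReal.ofReal (f a)).prod.toReal = (l.map f).prod := fun l ↦ by
    induction l with
    | nil => simp
    | cons a l ih => simp [ih, hf₀ a]
  refine (ENNReal.summable_toReal ?_).congr prod_eq
  rw [ennreal_tsum_list_prod_map, ← ENNReal.ofReal_tsum_of_nonneg hf₀ hf, ENNReal.inv_ne_top]
  exact (tsub_pos_of_lt (ENNReal.ofReal_lt_one.2 hf₁)).ne'

theorem exp_norm_list_sum_mul_norm_list_prod_le [NormedCommRing R] [NormOneClass R]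
    (w x : α → R) {ε : ℝ} (hε : 0 ≤ ε) (l : List α) :
    Real.exp (ε * ‖(l.map x).sum‖) * ‖(l.map w).prod‖ ≤
      (l.map fun a ↦ Real.exp (ε * ‖x a‖) * ‖w a‖).prod := by
  induction l with
  | nil => simp
  | cons a l ih =>
    simp only [List.map_cons, List.sum_cons, List.prod_cons]
    calc Real.exp (ε * ‖x a + (l.map x).sum‖) * ‖w a * (l.map w).prod‖
        ≤ Real.exp (ε * (‖x a‖ + ‖(l.map x).sum‖)) * (‖w a‖ * ‖(l.map w).prod‖) := by
          gcongr
          exacts [norm_add_le _ _, norm_mul_le _ _]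
      _ = Real.exp (ε * ‖x a‖) * ‖w a‖ *
            (Real.exp (ε * ‖(l.map x).sum‖) * ‖(l.map w).prod‖) := by
          rw [mul_add, Real.exp_add]
          ring
      _ ≤ _ := by gcongr

theorem summable_norm_list_pow_mul [NormedCommRing R] [NormOneClass R] {w x : α → R} {ε : ℝ}
    (hε : 0 < ε) (h : Summable fun a ↦ Real.exp (ε * ‖x a‖) * ‖w a‖)
    (h₁ : ∑' a, Real.exp (ε * ‖x a‖) * ‖w a‖ < 1) (k : ℕ) :
    Summable fun l : List α ↦ ‖(l.map x).sum ^ k * (l.map w).prod‖ :=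
  summable_norm_pow_mul_of_summable_exp hε
    (.of_nonneg_of_le (fun _ ↦ by positivity)
      (exp_norm_list_sum_mul_norm_list_prod_le w x hε.le)
      (summable_list_prod_map (fun _ ↦ by positivity) h h₁)) k

theorem hasSum_list_of_hasSum_cons [AddCommMonoid R] [TopologicalSpace R] [ContinuousAdd R]
    {f : List α → R} {r : R} (h : HasSum (fun p : List α × α ↦ f (p.2 :: p.1)) r) :
    HasSum f (f [] + r) := by
  let e : Unit ⊕ List α × α ≃ List α :=
    { toFun := Sum.elim (fun _ ↦ []) fun p ↦ p.2 :: p.1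
      invFun := fun
        | [] => .inl ()
        | a :: l => .inr (l, a)
      left_inv := by rintro (_ | _) <;> rfl
      right_inv := by rintro (_ | _) <;> rfl }
  refine e.hasSum_iff.1 (HasSum.sum ?_ h)
  exact hasSum_unique _

/-- The moment over all words in the alphabet `α`, where the weight `w` extends multiplicatively and
the height `x` additively from letters to words. -/
def listMoment [CommSemiring R] [TopologicalSpace R] (w x : α → R) (k : ℕ) : R :=
  moment (fun l : List α ↦ (l.map w).prod) (fun l ↦ (l.map x).sum) k

variable [NormedCommRing R] [CompleteSpace R] {w x : α → R}

theorem listMoment_eq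
    (hw : ∀ k, Summable fun a ↦ ‖x a ^ k * w a‖)
    (hl : ∀ k, Summable fun l : List α ↦ ‖(l.map x).sum ^ k * (l.map w).prod‖) (k : ℕ) :
    listMoment w x k = 0 ^ k + ∑ j ∈ Finset.range (k + 1),
      (k.choose j : R) * listMoment w x j * moment w x (k - j) := by
  have cons : HasSum
      (fun p : List α × α ↦ ((p.2 :: p.1).map x).sum ^ k * ((p.2 :: p.1).map w).prod)
      (∑ j ∈ Finset.range (k + 1), (k.choose j : R) * listMoment w x j * moment w x (k - j)) :=
    (hasSum_add_pow_mul_mul hl hw k).congr_fun fun p ↦ by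
      simp only [List.map_cons, List.sum_cons, List.prod_cons, add_comm, mul_comm]
  have h := hasSum_list_of_hasSum_cons (f := fun l ↦ (l.map x).sum ^ k * (l.map w).prod) cons
  simp only [List.map_nil, List.sum_nil, List.prod_nil, mul_one] at h
  exact h.tsum_eq

theorem one_sub_moment_zero_mul_listMoment_zero
    (hw : ∀ k, Summable fun a ↦ ‖x a ^ k * w a‖)
    (hl : ∀ k, Summable fun l : List α ↦ ‖(l.map x).sum ^ k * (l.map w).prod‖) :
    (1 - moment w x 0) * listMoment w x 0 = 1 := by
  have h := listMoment_eq hw hl 0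
  simp only [pow_zero, zero_add, Finset.sum_range_one, Nat.choose_self, Nat.cast_one, one_mul,
    Nat.sub_self] at h
  linear_combination h

theorem one_sub_moment_zero_mul_listMoment
    (hw : ∀ k, Summable fun a ↦ ‖x a ^ k * w a‖)
    (hl : ∀ k, Summable fun l : List α ↦ ‖(l.map x).sum ^ k * (l.map w).prod‖)
    {k : ℕ} (hk : k ≠ 0) :
    (1 - moment w x 0) * listMoment w x k =
      ∑ j ∈ Finset.range k, (k.choose j : R) * listMoment w x j * moment w x (k - j) := by
  have h := listMoment_eq hw hl k
  rw [zero_pow hk, zero_add, Finset.sum_range_succ, Nat.choose_self, Nat.cast_one, one_mul,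
    Nat.sub_self] at h
  linear_combination h

end Lists

section DirichletSeries

variable {P : Set ℕ}

/-- The term `n ^ (-s)` of the Dirichlet series of `P`, as a weight on the letters `n ∈ P`. -/
def cpowWeight (P : Set ℕ) (s : ℂ) (n : P) : ℂ := ((n : ℕ) : ℂ) ^ (-s)

/-- The height of a letter. Summed along a word of length `m` and product `n` it gives
`m - μ log n`, the quantity whose powers enter `bCoef`. -/
def logHeight (P : Set ℕ) (μ : ℝ) (n : P) : ℂ := ((1 - μ * Real.log (n : ℕ) : ℝ) : ℂ)

theorem list_prod_map_cpowWeight (s : ℂ) (l : List P) :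
    (l.map (cpowWeight P s)).prod = ((l.map Subtype.val).prod : ℕ) ^ (-s) := by
  induction l with
  | nil => simp
  | cons n l ih =>
    simp only [List.map_cons, List.prod_cons, ih, cpowWeight, Nat.cast_mul,
      Complex.natCast_mul_natCast_cpow]

theorem list_sum_map_logHeight (hP : 0 ∉ P) (μ : ℝ) (l : List P) :
    (l.map (logHeight P μ)).sum =
      ((l.length - μ * Real.log ((l.map Subtype.val).prod : ℕ) : ℝ) : ℂ) := by
  induction l with
  | nil => simp
  | cons n l ih =>
    have hn : ((n : ℕ) : ℝ) ≠ 0 := Nat.cast_ne_zero.2 (ne_of_mem_of_not_mem n.2 hP)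
    have hl : (((l.map Subtype.val).prod : ℕ) : ℝ) ≠ 0 := by
      simp [List.prod_eq_zero_iff, hP]
    simp only [List.map_cons, List.sum_cons, ih, logHeight, List.prod_cons, Nat.cast_mul,
      List.length_cons, Real.log_mul hn hl]
    push_cast
    ring

theorem af_eq_card_list (m n : ℕ) :
    af P m n = Nat.card {l : List P // (l.map Subtype.val).prod = n ∧ l.length = m} := by
  refine Nat.card_congr (Equiv.ofBijective
    (fun t ↦ ⟨List.ofFn fun i ↦ ⟨t.1 i, t.2.1 i⟩, ?_, List.length_ofFn⟩) ⟨?_, ?_⟩)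
  · simp only [List.map_ofFn, List.prod_ofFn, Function.comp_apply, t.2.2]
  · rintro ⟨t, ht⟩ ⟨u, hu⟩ h
    have h' := List.ofFn_injective (Subtype.mk.inj h)
    exact Subtype.ext (funext fun i ↦ congrArg Subtype.val (congrFun h' i))
  · rintro ⟨l, hl, rfl⟩
    refine ⟨⟨fun i ↦ l.get i, fun i ↦ (l.get i).2, ?_⟩, Subtype.ext (List.ofFn_get l)⟩
    rw [← List.prod_ofFn, ← hl, ← Function.comp_def, ← List.map_ofFn, List.ofFn_get]

theorem tsum_fiber_prod_length (hP : 0 ∉ P) (μ : ℝ) (s : ℂ) (k n m : ℕ) :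
    ∑' l : (fun l : List P ↦ ((l.map Subtype.val).prod, l.length)) ⁻¹' {(n, m)},
        (l.1.map (logHeight P μ)).sum ^ k * (l.1.map (cpowWeight P s)).prod =
      ((af P m n * (m - μ * Real.log n) ^ k : ℝ) : ℂ) * (n : ℂ) ^ (-s) := by
  have const : ∀ l : (fun l : List P ↦ ((l.map Subtype.val).prod, l.length)) ⁻¹' {(n, m)},
      (l.1.map (logHeight P μ)).sum ^ k * (l.1.map (cpowWeight P s)).prod =
        ((m - μ * Real.log n : ℝ) : ℂ) ^ k * (n : ℂ) ^ (-s) := by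
    rintro ⟨l, hl⟩
    obtain ⟨hn, hm⟩ := Prod.mk.inj hl
    rw [list_sum_map_logHeight hP, list_prod_map_cpowWeight, hn, hm]
  have card : Nat.card ((fun l : List P ↦ ((l.map Subtype.val).prod, l.length)) ⁻¹' {(n, m)}) =
      af P m n := by
    rw [af_eq_card_list]
    simp only [Set.coe_eq_subtype, Set.mem_preimage, Set.mem_singleton_iff, Prod.mk.injEq]
  rw [tsum_congr const, tsum_const, card, nsmul_eq_mul]
  push_cast
  ring

theorem hasSum_bCoef_mul_cpow (hP : 0 ∉ P) {μ : ℝ} {s : ℂ} {k : ℕ}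
    (h : Summable fun l : List P ↦
      (l.map (logHeight P μ)).sum ^ k * (l.map (cpowWeight P s)).prod) :
    HasSum (fun n : ℕ ↦ (bCoef P μ k n : ℂ) * (n : ℂ) ^ (-s))
      (listMoment (cpowWeight P s) (logHeight P μ) k) := by
  have hf := h.hasSum.tsum_fiberwise fun l : List P ↦ ((l.map Subtype.val).prod, l.length)
  simp only [tsum_fiber_prod_length hP] at hf
  refine (hf.prod_fiberwise fun n ↦ (hf.summable.prod_factor n).hasSum).congr_fun fun n ↦ ?_
  simp only [tsum_mul_right, bCoef, Complex.ofReal_tsum]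

theorem norm_cpowWeight (hP : 0 ∉ P) (s : ℂ) (n : P) :
    ‖cpowWeight P s n‖ = ((n : ℕ) : ℝ) ^ (-s.re) := by
  have hn : 0 < (n : ℕ) := Nat.pos_of_ne_zero (ne_of_mem_of_not_mem n.2 hP)
  rw [cpowWeight, Complex.norm_natCast_cpow_of_pos hn, Complex.neg_re]

theorem summable_norm_log_pow_mul_cpowWeight (hP : 0 ∉ P) {ρ : ℝ} {s : ℂ} (hs : ρ < s.re)
    (hρ : Summable fun n : P ↦ ((n : ℕ) : ℝ) ^ (-ρ)) (k : ℕ) :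
    Summable fun n : P ↦ ‖(Real.log (n : ℕ) : ℂ) ^ k * cpowWeight P s n‖ := by
  refine summable_norm_pow_mul_of_summable_exp (sub_pos.2 hs) (hρ.congr fun n ↦ ?_) k
  have hn : (1 : ℝ) ≤ (n : ℕ) :=
    Nat.one_le_cast.2 (Nat.pos_of_ne_zero (ne_of_mem_of_not_mem n.2 hP))
  rw [norm_cpowWeight hP, Complex.norm_real, Real.norm_of_nonneg (Real.log_nonneg hn),
    mul_comm (s.re - ρ), ← Real.rpow_def_of_pos (by linarith), ← Real.rpow_add (by linarith)]
  congr 1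
  ring

theorem norm_logHeight_le (hP : ∀ n ∈ P, 2 ≤ n) (μ : ℝ) (n : P) :
    ‖logHeight P μ n‖ ≤ (1 / Real.log 2 + |μ|) * Real.log (n : ℕ) := by
  have log_two_le : Real.log 2 ≤ Real.log (n : ℕ) :=
    Real.log_le_log two_pos (Nat.ofNat_le_cast.2 (hP n n.2))
  have log_two_pos : 0 < Real.log 2 := Real.log_pos one_lt_two
  calc ‖logHeight P μ n‖ = |1 - μ * Real.log (n : ℕ)| := Complex.norm_real _
    _ ≤ |1| + |μ * Real.log (n : ℕ)| := abs_sub _ _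
    _ = 1 + |μ| * Real.log (n : ℕ) := by
        rw [abs_one, abs_mul, abs_of_pos (log_two_pos.trans_le log_two_le)]
    _ ≤ (1 / Real.log 2 + |μ|) * Real.log (n : ℕ) := by
        rw [add_mul, one_div_mul_eq_div]
        gcongr
        rwa [one_le_div log_two_pos]

theorem exists_exp_mul_norm_cpowWeight_le (hP : ∀ n ∈ P, 2 ≤ n) (μ : ℝ) {ρ : ℝ} {s : ℂ}
    (hs : ρ < s.re) :
    ∃ ε > 0, ∃ c : ℝ, 0 ≤ c ∧ c < 1 ∧ ∀ n : P,
      Real.exp (ε * ‖logHeight P μ n‖) * ‖cpowWeight P s n‖ ≤ c * ((n : ℕ) : ℝ) ^ (-ρ) := by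
  -- Half of the gap `Re s - ρ` pays for the exponential, the other half for the factor `c < 1`.
  set δ := (s.re - ρ) / 2 with hδ
  have δ_pos : 0 < δ := by linarith
  refine ⟨δ / (1 / Real.log 2 + |μ|), by positivity, 2 ^ (-δ), by positivity,
    Real.rpow_lt_one_of_one_lt_of_neg one_lt_two (neg_neg_of_pos δ_pos), fun n ↦ ?_⟩
  have two_le : (2 : ℝ) ≤ (n : ℕ) := Nat.ofNat_le_cast.2 (hP n n.2)
  have n_pos : (0 : ℝ) < (n : ℕ) := two_pos.trans_le two_le
  have exponent_le :
      δ / (1 / Real.log 2 + |μ|) * ‖logHeight P μ n‖ ≤ Real.log (n : ℕ) * δ := by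
    rw [div_mul_eq_mul_div, div_le_iff₀ (by positivity)]
    linarith [mul_le_mul_of_nonneg_left (norm_logHeight_le hP μ n) δ_pos.le]
  calc Real.exp (δ / (1 / Real.log 2 + |μ|) * ‖logHeight P μ n‖) * ‖cpowWeight P s n‖
      ≤ ((n : ℕ) : ℝ) ^ δ * ((n : ℕ) : ℝ) ^ (-s.re) := by
        rw [norm_cpowWeight fun h ↦ absurd (hP 0 h) (by norm_num), Real.rpow_def_of_pos n_pos δ]
        gcongr
    _ = ((n : ℕ) : ℝ) ^ (-δ) * ((n : ℕ) : ℝ) ^ (-ρ) := by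
        rw [← Real.rpow_add n_pos, ← Real.rpow_add n_pos]
        congr 1
        linarith
    _ ≤ 2 ^ (-δ) * ((n : ℕ) : ℝ) ^ (-ρ) := by
        refine mul_le_mul_of_nonneg_right ?_ (by positivity)
        exact Real.rpow_le_rpow_of_nonpos two_pos two_le (neg_nonpos.2 δ_pos.le)

theorem exists_summable_exp_mul_cpowWeight (hP : ∀ n ∈ P, 2 ≤ n) (μ : ℝ) {ρ : ℝ} {s : ℂ}
    (hs : ρ < s.re) (hρ : Summable fun n : P ↦ ((n : ℕ) : ℝ) ^ (-ρ)) (hρ₁ : Pval P ρ ≤ 1) :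
    ∃ ε > 0, Summable (fun n ↦ Real.exp (ε * ‖logHeight P μ n‖) * ‖cpowWeight P s n‖) ∧
      ∑' n, Real.exp (ε * ‖logHeight P μ n‖) * ‖cpowWeight P s n‖ < 1 := by
  obtain ⟨ε, ε_pos, c, c_nonneg, c_lt_one, le⟩ := exists_exp_mul_norm_cpowWeight_le hP μ hs
  have summable := Summable.of_nonneg_of_le (fun n ↦ by positivity) le (hρ.mul_left c)
  refine ⟨ε, ε_pos, summable, ?_⟩
  calc ∑' n, Real.exp (ε * ‖logHeight P μ n‖) * ‖cpowWeight P s n‖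
      ≤ ∑' n : P, c * ((n : ℕ) : ℝ) ^ (-ρ) := summable.tsum_le_tsum le (hρ.mul_left c)
    _ = c * Pval P ρ := tsum_mul_left
    _ ≤ c := mul_le_of_le_one_right c_nonneg hρ₁
    _ < 1 := c_lt_one

theorem PvalC_eq_moment (x : P → ℂ) (s : ℂ) : PvalC P s = moment (cpowWeight P s) x 0 :=
  (moment_zero _ _).symm

theorem PdC_eq_moment (k : ℕ) (s : ℂ) :
    PdC P k s = (-1) ^ k * moment (cpowWeight P s) (fun n ↦ (Real.log (n : ℕ) : ℂ)) k :=
  rfl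

theorem Bser_eq_moment {s : ℂ}
    (h : ∀ k, Summable fun n : P ↦ (Real.log (n : ℕ) : ℂ) ^ k * cpowWeight P s n)
    (μ : ℝ) (k : ℕ) :
    Bser P μ k s = moment (cpowWeight P s) (logHeight P μ) k := by
  have height : logHeight P μ = fun n : P ↦ 1 + (-μ : ℂ) * (Real.log (n : ℕ) : ℂ) := by
    funext n
    simp only [logHeight]
    push_cast
    ring
  rw [height, moment_one_add_const_mul h, Bser]
  refine Finset.sum_congr rfl fun j _ ↦ ?_
  rw [PdC_eq_moment, neg_pow (μ : ℂ)]
  ring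

end DirichletSeries

theorem Mser_recurrence_general
    (P : Set ℕ) (hP : ∀ n ∈ P, 2 ≤ n) (ρ : ℝ)
    (hρ : Summable fun n : P ↦ ((n : ℕ) : ℝ) ^ (-ρ)) (hρ₁ : Pval P ρ ≤ 1) (μ : ℝ)
    (s : ℂ) (hs : ρ < s.re) :
    (∀ k : ℕ, Summable (fun n : ℕ ↦ ‖(bCoef P μ k n : ℂ) * (n : ℂ) ^ (-s)‖)) ∧
    Mser P μ 0 s = 1 / (1 - PvalC P s) ∧
    ∀ k : ℕ, 1 ≤ k →
      Mser P μ k s = (1 / (1 - PvalC P s)) *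
        ∑ j ∈ Finset.range k, (k.choose j : ℂ) * Mser P μ j s * Bser P μ (k - j) s := by
  have zero_notMem : 0 ∉ P := fun h ↦ absurd (hP 0 h) (by norm_num)
  obtain ⟨ε, ε_pos, exp_summable, exp_lt_one⟩ :=
    exists_summable_exp_mul_cpowWeight hP μ hs hρ hρ₁
  have letters := summable_norm_pow_mul_of_summable_exp ε_pos exp_summable
  have words := summable_norm_list_pow_mul ε_pos exp_summable exp_lt_one
  have hM := fun k ↦ hasSum_bCoef_mul_cpow zero_notMem (words k).of_norm
  have hB := Bser_eq_moment
    (fun k ↦ (summable_norm_log_pow_mul_cpowWeight zero_notMem hs hρ k).of_norm) μ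
  have Mser_zero := one_sub_moment_zero_mul_listMoment_zero letters words
  have ne_zero := left_ne_zero_of_mul_eq_one Mser_zero
  simp only [Mser, (hM _).tsum_eq, hB, PvalC_eq_moment (logHeight P μ)]
  refine ⟨fun k ↦ (hM k).summable.norm, ?_, fun k hk ↦ ?_⟩
  · exact eq_one_div_of_mul_eq_one_right Mser_zero
  · rw [one_div, eq_inv_mul_iff_mul_eq₀ ne_zero]
    exact one_sub_moment_zero_mul_listMoment letters words (Nat.one_le_iff_ne_zero.1 hk)

/-- **The Dirichlet series `M_k` and their recurrence.** For `Re s > ρ` all the series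
`M_k(s)` converge absolutely, `M_0(s) = 1/(1 - 𝒫(s))`, and for `k ≥ 1`,
`M_k(s) = (1/(1 - 𝒫(s))) Σ_{0 ≤ j < k} C(k,j) M_j(s) B_{k-j}(s)`. -/
theorem Mser_recurrence
    (P : Set ℕ) (hP : ∀ n ∈ P, 2 ≤ n) (hP2 : P.Nontrivial)
    (hκ : 1 < PvalE P (kappa P))
    (ρ : ℝ) (hρ0 : 0 < ρ) (hρκ : kappa P < (ρ : EReal)) (hρ1 : Pval P ρ = 1)
    (μ : ℝ) (hμ : μ = -1 / Pderiv1 P ρ) :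
    ∀ s : ℂ, ρ < s.re →
      (∀ k : ℕ, Summable (fun n : ℕ => ‖(bCoef P μ k n : ℂ) * (n : ℂ) ^ (-s)‖)) ∧
      Mser P μ 0 s = 1 / (1 - PvalC P s) ∧
      ∀ k : ℕ, 1 ≤ k →
        Mser P μ k s = (1 / (1 - PvalC P s)) *
          ∑ j ∈ Finset.range k, (k.choose j : ℂ) * Mser P μ j s * Bser P μ (k - j) s :=
  Mser_recurrence_general P hP ρ
    (not_imp_comm.1 tsum_eq_zero_of_not_summable (hρ1.trans_ne one_ne_zero)) hρ1.le μ
end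
end
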